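/- Let W be a discrete memoryless channel with R_cr < C, and suppose Q ∈ P(𝒳) and R > 0 are such that the pair (Q,W) is singular and R_cr(Q) < R < I(Q;W). Then there exists a constant K̃₁ > 0, depending only on W, R and Q, such that for every positive integer N there exists an (N,R) code (f,φ) whose maximal error probability satisfies P_e(f,φ) ≤ (K̃₁/√N) · e^{−N·E_r(R,Q)}. -/

import Mathlib

open Real BigOperators
open scoped Classical

namespace RCB

/-- A probability distribution on a finite alphabet. -/
def IsDist {α : Type*} [Fintype α] (Q : α → ℝ) : Prop :=
  (∀ a, 0 ≤ Q a) ∧ ∑ a, Q a = 1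

/-- A discrete memoryless channel, i.e. a stochastic matrix from `X` to `Y`. -/
def IsChannel {X Y : Type*} [Fintype X] [Fintype Y] (W : X → Y → ℝ) : Prop :=
  (∀ x y, 0 ≤ W x y) ∧ ∀ x, ∑ y, W x y = 1

/-- The Gallager function `E_o(ρ, Q)`. -/
noncomputable def Eo {X Y : Type*} [Fintype X] [Fintype Y]
    (W : X → Y → ℝ) (ρ : ℝ) (Q : X → ℝ) : ℝ :=
  - Real.log (∑ y, (∑ x, Q x * W x y ^ (1 / (1 + ρ))) ^ (1 + ρ))

/-- The random coding exponent `E_r(R, Q)` for input distribution `Q`. -/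
noncomputable def ErQ {X Y : Type*} [Fintype X] [Fintype Y]
    (W : X → Y → ℝ) (R : ℝ) (Q : X → ℝ) : ℝ :=
  sSup ((fun ρ => -ρ * R + Eo W ρ Q) '' Set.Icc (0 : ℝ) 1)

/-- The random coding exponent `E_r(R)`. -/
noncomputable def Er {X Y : Type*} [Fintype X] [Fintype Y]
    (W : X → Y → ℝ) (R : ℝ) : ℝ :=
  sSup {v : ℝ | ∃ Q : X → ℝ, IsDist Q ∧ v = ErQ W R Q}

/-- The mutual information `I(Q; W)` (natural logarithm). -/
noncomputable def MI {X Y : Type*} [Fintype X] [Fintype Y]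
    (W : X → Y → ℝ) (Q : X → ℝ) : ℝ :=
  ∑ x, ∑ y, Q x * W x y * Real.log (W x y / ∑ x', Q x' * W x' y)

/-- The capacity `C = max_Q I(Q;W)`. -/
noncomputable def Capacity {X Y : Type*} [Fintype X] [Fintype Y]
    (W : X → Y → ℝ) : ℝ :=
  sSup {v : ℝ | ∃ Q : X → ℝ, IsDist Q ∧ v = MI W Q}

/-- The critical rate of the input distribution `Q`:
`R_cr(Q) = ∂E_o(ρ,Q)/∂ρ |_{ρ=1}`. -/
noncomputable def RcrQ {X Y : Type*} [Fintype X] [Fintype Y]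
    (W : X → Y → ℝ) (Q : X → ℝ) : ℝ :=
  deriv (fun ρ => Eo W ρ Q) 1

/-- The critical rate of the channel: the largest `R` with
`E_r(R) = -R + max_Q E_o(1,Q)`. -/
noncomputable def Rcr {X Y : Type*} [Fintype X] [Fintype Y]
    (W : X → Y → ℝ) : ℝ :=
  sSup {R : ℝ | Er W R = -R + sSup {v : ℝ | ∃ Q : X → ℝ, IsDist Q ∧ v = Eo W 1 Q}}

/-- The rate `R_∞ = inf {R ≥ 0 : E_SP(R) < ∞}` (finiteness of the
sphere-packing exponent expressed as boundedness of the family of affine maps). -/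
noncomputable def Rinf {X Y : Type*} [Fintype X] [Fintype Y]
    (W : X → Y → ℝ) : ℝ :=
  sInf {R : ℝ | 0 ≤ R ∧
    BddAbove {v : ℝ | ∃ (Q : X → ℝ) (ρ : ℝ), IsDist Q ∧ 0 ≤ ρ ∧ v = -ρ * R + Eo W ρ Q}}

/-- The pair `(Q, W)` is singular if `W(y|x) = W(y|z)` whenever
`Q(x)W(y|x)Q(z)W(y|z) > 0`. -/
def Singular {X Y : Type*} (W : X → Y → ℝ) (Q : X → ℝ) : Prop :=
  ∀ x y z, 0 < Q x * W x y * (Q z * W z y) → W x y = W z y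

/-- `ρ^*_R(Q) = -∂E_r(a,Q)/∂a |_{a=R}`. -/
noncomputable def rhoStarQ {X Y : Type*} [Fintype X] [Fintype Y]
    (W : X → Y → ℝ) (Q : X → ℝ) (R : ℝ) : ℝ :=
  - deriv (fun a => ErQ W a Q) R

/-- The number of messages of an `(N, R)` code: `⌈exp (N R)⌉`. -/
noncomputable def nMsgs (N : ℕ) (R : ℝ) : ℕ := ⌈Real.exp (N * R)⌉₊

/-- The `N`-fold memoryless extension of the channel `W`. -/
noncomputable def Wn {X Y : Type*} (W : X → Y → ℝ) {N : ℕ}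
    (c : Fin N → X) (y : Fin N → Y) : ℝ :=
  ∏ n, W (c n) (y n)

/-- The maximal error probability of the code `(f, φ)` over the `N`-fold
memoryless extension of `W`. -/
noncomputable def Pmax {X Y : Type*} [Fintype X] [Fintype Y] {M N : ℕ}
    (W : X → Y → ℝ) (f : Fin M → Fin N → X) (φ : (Fin N → Y) → Fin M) : ℝ :=
  ⨆ m : Fin M, ∑ y : Fin N → Y, Wn W (f m) y * (if φ y ≠ m then (1 : ℝ) else 0)

/-- The ensemble average error probability `P̄_e(Q, N, R)`: the `⌈exp (N R)⌉`
codewords are drawn i.i.d. from `Q^N` and decoded by maximum-likelihood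
decoding, ties counted as errors. -/
noncomputable def Pbar {X Y : Type*} [Fintype X] [Fintype Y]
    (W : X → Y → ℝ) (Q : X → ℝ) (N : ℕ) (R : ℝ) : ℝ :=
  ∑ c : Fin (nMsgs N R) → Fin N → X,
    (∏ m, ∏ n, Q (c m n)) *
      ((nMsgs N R : ℝ)⁻¹ *
        ∑ m, ∑ y : Fin N → Y,
          Wn W (c m) y *
            (if ∃ m', m' ≠ m ∧ Wn W (c m) y ≤ Wn W (c m') y then (1 : ℝ) else 0))

/-- The tilted output distribution `f_ρ`. -/
noncomputable def fRho {X Y : Type*} [Fintype X] [Fintype Y]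
    (W : X → Y → ℝ) (Q : X → ℝ) (ρ : ℝ) (y : Y) : ℝ :=
  (∑ x, Q x * W x y ^ (1 / (1 + ρ))) ^ (1 + ρ) /
    ∑ b, (∑ a, Q a * W a b ^ (1 / (1 + ρ))) ^ (1 + ρ)

/-- The cumulant generating function
`Λ_ρ(λ) = log E_{P_{X,Y}}[exp(λ log (f_ρ(Y)/W(Y|X)))]` with `P_{X,Y} = Q × W`. -/
noncomputable def Lam {X Y : Type*} [Fintype X] [Fintype Y]
    (W : X → Y → ℝ) (Q : X → ℝ) (ρ : ℝ) (t : ℝ) : ℝ :=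
  Real.log (∑ x, ∑ y, Q x * W x y * Real.exp (t * Real.log (fRho W Q ρ y / W x y)))

/-- `P_{X,Y,Z}(S̃_Q)` where `P_{X,Y,Z}(x,y,z) = Q(x)W(y|x)Q(z)` and
`S̃_Q = {(x,y,z) : Q(x)W(y|x)Q(z)W(y|z) > 0}`. -/
noncomputable def PStilde {X Y : Type*} [Fintype X] [Fintype Y]
    (W : X → Y → ℝ) (Q : X → ℝ) : ℝ :=
  ∑ x, ∑ y, ∑ z,
    if 0 < Q x * W x y * (Q z * W z y) then Q x * W x y * Q z else 0

/-- The bivariate cumulant generating function `Λ_{1,ρ}(v)` with respect to the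
conditional distribution `P̃_{X,Y,Z}` of `P_{X,Y,Z}` given `S̃_Q`. -/
noncomputable def Lam1 {X Y : Type*} [Fintype X] [Fintype Y]
    (W : X → Y → ℝ) (Q : X → ℝ) (ρ : ℝ) (v : ℝ × ℝ) : ℝ :=
  Real.log ((∑ x, ∑ y, ∑ z,
    if 0 < Q x * W x y * (Q z * W z y) then
      Q x * W x y * Q z *
        Real.exp (v.1 * Real.log (W x y / fRho W Q ρ y) +
          v.2 * Real.log (W z y / W x y))
    else 0) / PStilde W Q)

/-- The subdifferential of `f : ℝ → ℝ` at `R` (for convex `f`). -/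
def Subderiv (f : ℝ → ℝ) (R : ℝ) : Set ℝ :=
  {g : ℝ | ∀ x, f R + g * (x - R) ≤ f x}

/-- The tilted backward channel `P^ρ_{X|Y}`. -/
noncomputable def PXgY {X Y : Type*} [Fintype X]
    (W : X → Y → ℝ) (Q : X → ℝ) (ρ : ℝ) (x : X) (y : Y) : ℝ :=
  Q x * W x y ^ (1 / (1 + ρ)) / ∑ a, Q a * W a y ^ (1 / (1 + ρ))

/-- The tilted joint distribution `P^ρ_{X,Y}(x,y) = P^ρ_{X|Y}(x|y) P^ρ_Y(y)`. -/
noncomputable def PXY {X Y : Type*} [Fintype X] [Fintype Y]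
    (W : X → Y → ℝ) (Q : X → ℝ) (ρ : ℝ) (x : X) (y : Y) : ℝ :=
  PXgY W Q ρ x y * fRho W Q ρ y

/-!
Draw the codewords independently from `Q^N`, and let the decoder pick any codeword compatible with
the output. Expurgating half of the codewords reduces the claim to a bound on
`E[min(1, e^{NR} q(Y))]`, where `q(y)` is the probability that a fresh codeword is compatible with
the output `y`. For a singular pair the information density depends on the output letter only, and
`q(y) = e^{-S}`, where `S` is the sum of the information densities of the letters of `y`.

Tilting the output letters to `f_ρ`, with `ρ` the maximizer in `E_r(R, Q)`, extracts the factor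
`e^{-N E_r(R, Q)}`. As `R_cr(Q) < R < I(Q; W)`, this `ρ` lies strictly between `0` and `1`, and what
remains is at most `E[e^{-κ|S - NR|}]` with `κ = min(ρ, 1 - ρ) > 0`. Moreover
`R_cr(Q) < I(Q; W)` forces the information density to be nonconstant, so that `S` is a nondegenerate
random walk, which spends only a fraction `O(1/√N)` of its mass near `NR`.
-/

/-! ### Real analysis -/

theorem exists_mem_Ioo_isMaxOn {f : ℝ → ℝ} {a b da db : ℝ} (hab : a < b)
    (hf : ContinuousOn f (Set.Icc a b)) (ha : HasDerivWithinAt f da (Set.Icc a b) a)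
    (hb : HasDerivWithinAt f db (Set.Icc a b) b) (hda : 0 < da) (hdb : db < 0) :
    ∃ c ∈ Set.Ioo a b, IsMaxOn f (Set.Icc a b) c := by
  obtain ⟨c, hc, hmax⟩ := isCompact_Icc.exists_isMaxOn (Set.nonempty_Icc.2 hab.le) hf
  have htangent {x y : ℝ} (hx : x ∈ Set.Icc a b) (hy : y ∈ Set.Icc a b) :
      y - x ∈ posTangentConeAt (Set.Icc a b) x :=
    sub_mem_posTangentConeAt_of_segment_subset ((convex_Icc a b).segment_subset hx hy)
  refine ⟨c, ⟨hc.1.lt_of_ne ?_, hc.2.lt_of_ne ?_⟩, hmax⟩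
  · rintro rfl
    have hle : (b - a) * da ≤ 0 := by
      simpa using hmax.localize.hasFDerivWithinAt_nonpos ha.hasFDerivWithinAt
        (htangent hc (Set.right_mem_Icc.2 hab.le))
    nlinarith
  · rintro rfl
    have hle : (a - c) * db ≤ 0 := by
      simpa using hmax.localize.hasFDerivWithinAt_nonpos hb.hasFDerivWithinAt
        (htangent hc (Set.left_mem_Icc.2 hab.le))
    nlinarith

theorem min_one_exp_le {ρ κ : ℝ} (h1 : κ ≤ ρ) (h2 : κ ≤ 1 - ρ) (v : ℝ) :
    min 1 (Real.exp v) ≤ Real.exp (ρ * v) * Real.exp (-κ * |v|) := by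
  rw [← Real.exp_add]
  rcases le_total 0 v with hv | hv
  · refine (min_le_left _ _).trans (Real.one_le_exp ?_)
    rw [abs_of_nonneg hv]
    nlinarith
  · refine (min_le_right _ _).trans (Real.exp_le_exp.2 ?_)
    rw [abs_of_nonpos hv]
    nlinarith

theorem summable_pow_natAbs {r : ℝ} (h0 : 0 ≤ r) (h1 : r < 1) :
    Summable fun i : ℤ => r ^ i.natAbs := by
  refine Summable.of_nat_of_neg ?_ ?_ <;>
    simpa using summable_geometric_of_lt_one h0 h1

theorem exists_sum_exp_neg_abs_le {κ δ : ℝ} (hκ : 0 < κ) (hδ : 0 < δ) :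
    ∃ G : ℝ, ∀ (c : ℝ) (n : ℕ), ∑ j ∈ Finset.range n, Real.exp (-κ * |c + j * δ|) ≤ G := by
  set r := Real.exp (-(κ * δ)) with hr
  have hr1 : r < 1 := Real.exp_lt_one_iff.2 (by linarith [mul_pos hκ hδ])
  have hsummable := summable_pow_natAbs (Real.exp_pos _).le hr1
  refine ⟨Real.exp (κ * δ) * ∑' i : ℤ, r ^ i.natAbs, fun c n => ?_⟩
  set m : ℤ := round (c / δ)
  have hround : |m * δ - c| ≤ δ := by
    have h := abs_sub_round (c / δ)
    calc |m * δ - c| = |c / δ - m| * δ := by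
          rw [← abs_of_pos hδ, ← abs_mul, abs_of_pos hδ, sub_mul, div_mul_cancel₀ _ hδ.ne',
            abs_sub_comm]
      _ ≤ 1 / 2 * δ := by gcongr
      _ ≤ δ := by linarith
  have hterm (j : ℕ) : Real.exp (-κ * |c + j * δ|) ≤
      Real.exp (κ * δ) * r ^ ((j : ℤ) + m).natAbs := by
    rw [hr, ← Real.exp_nat_mul, ← Real.exp_add, Real.exp_le_exp, Nat.cast_natAbs]
    push_cast
    have hdist : |(j : ℝ) + m| * δ ≤ |c + j * δ| + δ := by
      calc |(j : ℝ) + m| * δ = |(c + j * δ) + (m * δ - c)| := by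
            rw [← abs_of_pos hδ, ← abs_mul, abs_of_pos hδ]; congr 1; ring
        _ ≤ |c + j * δ| + δ := (abs_add_le _ _).trans (by gcongr)
    nlinarith
  have hinj : Function.Injective fun j : ℕ => (j : ℤ) + m :=
    (add_left_injective m).comp Nat.cast_injective
  calc ∑ j ∈ Finset.range n, Real.exp (-κ * |c + j * δ|)
      ≤ Real.exp (κ * δ) * ∑ j ∈ Finset.range n, r ^ ((j : ℤ) + m).natAbs := by
        rw [Finset.mul_sum]
        exact Finset.sum_le_sum fun j _ => hterm j
    _ = Real.exp (κ * δ) * ∑ i ∈ (Finset.range n).map ⟨_, hinj⟩, r ^ i.natAbs := by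
        rw [Finset.sum_map]; rfl
    _ ≤ Real.exp (κ * δ) * ∑' i : ℤ, r ^ i.natAbs := by
        gcongr
        exact hsummable.sum_le_tsum _ fun i _ => by positivity

/-! ### Central binomial coefficients and binomial averages -/

theorem centralBinom_sq_mul_le (n : ℕ) : n.centralBinom ^ 2 * (2 * n + 1) ≤ 4 ^ (2 * n) := by
  induction n with
  | zero => simp
  | succ n ih =>
    refine le_of_mul_le_mul_left ?_ (by positivity : 0 < (n + 1) ^ 2)
    calc (n + 1) ^ 2 * ((n + 1).centralBinom ^ 2 * (2 * (n + 1) + 1))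
        = ((n + 1) * (n + 1).centralBinom) ^ 2 * (2 * n + 3) := by ring
      _ = (n.centralBinom ^ 2 * (2 * n + 1)) * (4 * ((2 * n + 1) * (2 * n + 3))) := by
          rw [Nat.succ_mul_centralBinom_succ]; ring
      _ ≤ 4 ^ (2 * n) * (4 * (4 * (n + 1) ^ 2)) :=
          Nat.mul_le_mul ih (by nlinarith)
      _ = (n + 1) ^ 2 * 4 ^ (2 * (n + 1)) := by ring

theorem choose_half_sq_mul_le (n : ℕ) : n.choose (n / 2) ^ 2 * (n + 1) ≤ 4 ^ n := by
  obtain ⟨m, rfl | rfl⟩ := Nat.even_or_odd' n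
  · simpa [Nat.centralBinom_eq_two_mul_choose] using centralBinom_sq_mul_le m
  · have hcentral : (m + 1).centralBinom = 2 * (2 * m + 1).choose m := by
      rw [Nat.centralBinom_eq_two_mul_choose, show 2 * (m + 1) = 2 * m + 1 + 1 by ring,
        Nat.choose_succ_succ, Nat.choose_symm_half]
      ring
    have h := centralBinom_sq_mul_le (m + 1)
    rw [hcentral, show 2 * (m + 1) = (2 * m + 1) + 1 by ring, pow_succ 4] at h
    rw [show (2 * m + 1) / 2 = m by omega]
    nlinarith [sq_nonneg ((2 * m + 1).choose m)]

theorem choose_le_two_pow_div_sqrt (n k : ℕ) : (n.choose k : ℝ) ≤ 2 ^ n / √(n + 1) := by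
  have hmiddle : (n.choose k : ℝ) ≤ n.choose (n / 2) := by exact_mod_cast Nat.choose_le_middle k n
  refine hmiddle.trans ?_
  rw [le_div_iff₀ (by positivity)]
  refine le_of_sq_le_sq ?_ (by positivity)
  rw [mul_pow, Real.sq_sqrt (by positivity), ← pow_mul, mul_comm n 2, pow_mul,
    show (2 : ℝ) ^ 2 = 4 by norm_num]
  exact_mod_cast choose_half_sq_mul_le n

section BinomialAverage
variable {θ : ℝ}

theorem sum_binomial_div_succ_le (h0 : 0 < θ) (h1 : θ ≤ 1) (N : ℕ) :
    ∑ k ∈ Finset.range (N + 1), θ ^ k * (1 - θ) ^ (N - k) * N.choose k * (1 / (k + 1)) ≤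
      1 / (θ * (N + 1)) := by
  have hbinomial := add_pow θ (1 - θ) (N + 1)
  rw [Finset.sum_range_succ', add_sub_cancel, one_pow] at hbinomial
  have hzero : 0 ≤ θ ^ 0 * (1 - θ) ^ (N + 1 - 0) * ((N + 1).choose 0 : ℝ) := by
    have : 0 ≤ 1 - θ := by linarith
    positivity
  have hterm (k : ℕ) : θ ^ k * (1 - θ) ^ (N - k) * (N.choose k : ℝ) * (1 / (k + 1)) *
      (θ * (N + 1)) = θ ^ (k + 1) * (1 - θ) ^ (N + 1 - (k + 1)) * (N + 1).choose (k + 1) := by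
    have h : ((N : ℝ) + 1) * N.choose k = (N + 1).choose (k + 1) * (k + 1) := by
      exact_mod_cast Nat.add_one_mul_choose_eq N k
    rw [Nat.add_sub_add_right]
    field_simp
    linear_combination θ * θ ^ k * (1 - θ) ^ (N - k) * h
  rw [le_div_iff₀ (by positivity), Finset.sum_mul, Finset.sum_congr rfl fun k _ => hterm k]
  linarith

theorem sum_binomial_div_sqrt_succ_le (h0 : 0 < θ) (h1 : θ ≤ 1) (N : ℕ) :
    ∑ k ∈ Finset.range (N + 1), θ ^ k * (1 - θ) ^ (N - k) * N.choose k * (1 / √(k + 1)) ≤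
      1 / √(θ * (N + 1)) := by
  have : 0 ≤ 1 - θ := by linarith
  have hjensen := Real.strictConcaveOn_sqrt.concaveOn.le_map_sum
    (t := Finset.range (N + 1)) (w := fun k => θ ^ k * (1 - θ) ^ (N - k) * N.choose k)
    (p := fun k => 1 / ((k : ℝ) + 1)) (fun k _ => by positivity)
    (by rw [← add_pow]; simp) (fun k _ => Set.mem_Ici.2 (by positivity))
  simp only [smul_eq_mul, Real.sqrt_div zero_le_one, Real.sqrt_one] at hjensen
  refine hjensen.trans ?_
  rw [← Real.sqrt_one, ← Real.sqrt_div zero_le_one, Real.sqrt_one]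
  exact Real.sqrt_le_sqrt (sum_binomial_div_succ_le h0 h1 N)

end BinomialAverage

/-! ### Anti-concentration of random walks -/

section RandomWalk
variable {E Y : Type*} [Fintype Y]

/-- Translation of functions by `s`, as a linear operator. The translations commute, so sums of
them can be expanded by the binomial theorem. -/
def translate [Add E] (s : E) : Module.End ℝ (E → ℝ) := LinearMap.funLeft ℝ ℝ (· + s)

/-- The Markov operator of the random walk on `E` with step `T y` of weight `w y`. -/
noncomputable def walkOp [Add E] (T : Y → E) (w : Y → ℝ) : Module.End ℝ (E → ℝ) :=
  Fintype.linearCombination ℝ (fun y => translate (T y)) w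

theorem translate_apply [Add E] (s : E) (F : E → ℝ) (u : E) : translate s F u = F (u + s) := rfl

theorem walkOp_apply [Add E] (T : Y → E) (w : Y → ℝ) (F : E → ℝ) (u : E) :
    walkOp T w F u = ∑ y, w y * F (u + T y) := by
  simp [walkOp, Fintype.linearCombination_apply, translate_apply]

theorem walkOp_pow_apply [AddCommMonoid E] (T : Y → E) (w : Y → ℝ) (n : ℕ) (F : E → ℝ) (u : E) :
    (walkOp T w ^ n) F u = ∑ y : Fin n → Y, (∏ i, w (y i)) * F (u + ∑ i, T (y i)) := by
  induction n generalizing u with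
  | zero => simp
  | succ n ih =>
    rw [pow_succ', Module.End.mul_apply, walkOp_apply, ← (Fin.consEquiv fun _ => Y).sum_comp,
      Fintype.sum_prod_type]
    refine Finset.sum_congr rfl fun y _ => ?_
    rw [ih, Finset.mul_sum]
    refine Finset.sum_congr rfl fun z _ => ?_
    simp [Fin.consEquiv, Fin.prod_univ_succ, Fin.sum_univ_succ, mul_assoc, add_assoc]

theorem walkOp_pow_le [Add E] {T : Y → E} {w : Y → ℝ} (hw : ∀ y, 0 ≤ w y) {F : E → ℝ} {C : ℝ}
    (hF : ∀ u, F u ≤ C) (n : ℕ) (u : E) : (walkOp T w ^ n) F u ≤ (∑ y, w y) ^ n * C := by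
  induction n generalizing u with
  | zero => simpa using hF u
  | succ n ih =>
    rw [pow_succ', Module.End.mul_apply, walkOp_apply, pow_succ', mul_assoc, Finset.sum_mul]
    exact Finset.sum_le_sum fun y _ => mul_le_mul_of_nonneg_left (ih _) (hw y)

variable [AddCommGroup E] {F : E → ℝ} {G : ℝ}

theorem translate_pow_apply (s : E) (n : ℕ) (F : E → ℝ) (u : E) :
    (translate s ^ n) F u = F (u + n • s) := by
  induction n generalizing u with
  | zero => simp
  | succ n ih => rw [pow_succ', Module.End.mul_apply, translate_apply, ih, succ_nsmul', add_assoc]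

theorem translate_commute (s t : E) : Commute (translate s) (translate t) :=
  LinearMap.ext fun F => funext fun u => by
    simp only [Module.End.mul_apply, translate_apply, add_right_comm u]

theorem walkOp_commute_translate (T : Y → E) (w : Y → ℝ) (s : E) :
    Commute (walkOp T w) (translate s) := by
  rw [walkOp, Fintype.linearCombination_apply]
  exact Commute.sum_left _ _ _ fun _ _ => (translate_commute _ _).smul_left _

theorem coin_pow_le {a b : E} (hF : ∀ u, 0 ≤ F u)
    (hG : ∀ c n, ∑ j ∈ Finset.range n, F (c + j • (b - a)) ≤ G) (n : ℕ) (u : E) :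
    ((translate b + translate a) ^ n) F u ≤ 2 ^ n * (G * (1 / √(n + 1))) := by
  have hterm : ∀ j ∈ Finset.range (n + 1),
      (translate b ^ j * translate a ^ (n - j) * (n.choose j : Module.End ℝ (E → ℝ))) F u =
        n.choose j * F (u + n • a + j • (b - a)) := fun j hj => by
    have hjn : j ≤ n := Nat.lt_succ_iff.1 (Finset.mem_range.1 hj)
    rw [← nsmul_eq_mul', LinearMap.smul_apply, Pi.smul_apply, nsmul_eq_mul,
      Module.End.mul_apply, translate_pow_apply, translate_pow_apply]
    congr 2
    rw [← Nat.sub_add_cancel hjn, add_nsmul, Nat.add_sub_cancel, nsmul_sub]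
    abel
  rw [(translate_commute b a).add_pow, LinearMap.sum_apply, Finset.sum_apply,
    Finset.sum_congr rfl hterm]
  calc ∑ j ∈ Finset.range (n + 1), n.choose j * F (u + n • a + j • (b - a))
      ≤ ∑ j ∈ Finset.range (n + 1), 2 ^ n / √(n + 1) * F (u + n • a + j • (b - a)) := by
        gcongr
        · exact hF _
        · exact choose_le_two_pow_div_sqrt n _
    _ ≤ 2 ^ n / √(n + 1) * G := by rw [← Finset.mul_sum]; gcongr; exact hG _ _
    _ = 2 ^ n * (G * (1 / √(n + 1))) := by ring

theorem add_smul_coin_pow_le {T : Y → E} {d : Y → ℝ} (hd : ∀ y, 0 ≤ d y) {t : ℝ} (ht : 0 < t)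
    (hsum : ∑ y, d y = 1 - 2 * t) {a b : E} (hF : ∀ u, 0 ≤ F u)
    (hG : ∀ c n, ∑ j ∈ Finset.range n, F (c + j • (b - a)) ≤ G) (N : ℕ) (u : E) :
    ((t • (translate b + translate a) + walkOp T d) ^ N) F u ≤ G / √(2 * t * (N + 1)) := by
  set A := walkOp T d
  set B := t • (translate b + translate a)
  have hG0 : 0 ≤ G := by simpa using hG 0 0
  have ht1 : 2 * t ≤ 1 := by linarith [Finset.sum_nonneg fun y (_ : y ∈ Finset.univ) => hd y]
  have hcomm : Commute B A :=
    (((walkOp_commute_translate T d b).add_right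
      (walkOp_commute_translate T d a)).smul_right t).symm
  have hB (k : ℕ) (v : E) : (B ^ k) F v ≤ (2 * t) ^ k * (G * (1 / √(k + 1))) := by
    rw [smul_pow, LinearMap.smul_apply, Pi.smul_apply, smul_eq_mul, mul_comm 2, mul_pow, mul_assoc]
    gcongr
    exact coin_pow_le hF hG k v
  have hterm (k : ℕ) :
      (B ^ k * A ^ (N - k) * (N.choose k : Module.End ℝ (E → ℝ))) F u ≤
        G * ((2 * t) ^ k * (1 - 2 * t) ^ (N - k) * N.choose k * (1 / √(k + 1))) := by
    rw [← nsmul_eq_mul', LinearMap.smul_apply, Pi.smul_apply, nsmul_eq_mul,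
      (hcomm.pow_pow k (N - k)).eq, Module.End.mul_apply]
    have h := walkOp_pow_le (T := T) hd (hB k) (N - k) u
    rw [hsum] at h
    exact (mul_le_mul_of_nonneg_left h (Nat.cast_nonneg _)).trans_eq (by ring)
  rw [hcomm.add_pow, LinearMap.sum_apply, Finset.sum_apply]
  calc ∑ k ∈ Finset.range (N + 1), (B ^ k * A ^ (N - k) * (N.choose k : Module.End ℝ (E → ℝ))) F u
      ≤ G * ∑ k ∈ Finset.range (N + 1),
          (2 * t) ^ k * (1 - 2 * t) ^ (N - k) * N.choose k * (1 / √(k + 1)) := by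
        rw [Finset.mul_sum]
        exact Finset.sum_le_sum fun k _ => hterm k
    _ ≤ G * (1 / √(2 * t * (N + 1))) := by
        gcongr
        exact sum_binomial_div_sqrt_succ_le (by positivity) ht1 N
    _ = G / √(2 * t * (N + 1)) := by ring

/-- A step has law `d + t δ_a + t δ_b`: it is a fair toss between `T a` and `T b` with probability
`2 t`, so about `2 t N` of the `N` steps are tosses, and these alone spread the walk out. -/
theorem walkOp_pow_le_div_sqrt {T : Y → E} {w : Y → ℝ} (hw : IsDist w) {a b : Y} (hab : a ≠ b)
    {t : ℝ} (ht : 0 < t) (ha : t ≤ w a) (hb : t ≤ w b) (hF : ∀ u, 0 ≤ F u)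
    (hG : ∀ c n, ∑ j ∈ Finset.range n, F (c + j • (T b - T a)) ≤ G) (N : ℕ) (u : E) :
    (walkOp T w ^ N) F u ≤ G / √(2 * t * (N + 1)) := by
  set d : Y → ℝ := w - Pi.single b t - Pi.single a t
  have hd (y : Y) : 0 ≤ d y := by
    have := hw.1 y
    simp only [d, Pi.sub_apply, Pi.single_apply]
    split_ifs with hyb hya hya
    · exact absurd (hya.symm.trans hyb) hab
    · subst hyb; linarith
    · subst hya; linarith
    · linarith
  have hsum : ∑ y, d y = 1 - 2 * t := by
    simp only [d, Pi.sub_apply, Finset.sum_sub_distrib, hw.2, Finset.sum_pi_single',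
      Finset.mem_univ, if_true]
    ring
  have hsplit : walkOp T w = t • (translate (T b) + translate (T a)) + walkOp T d := by
    simp only [d, walkOp, map_sub, Fintype.linearCombination_apply_single, smul_add]
    abel
  rw [hsplit]
  exact add_smul_coin_pow_le hd ht hsum hF hG N u

end RandomWalk

/-! ### Random codes -/

theorem IsDist.exists_pos {α : Type*} [Fintype α] {P : α → ℝ} (hP : IsDist P) : ∃ a, 0 < P a := by
  by_contra! hle
  linarith [hP.2, Finset.sum_nonpos fun a (_ : a ∈ Finset.univ) => hle a]

theorem IsDist.exists_le_of_sum_mul_le {α : Type*} [Fintype α] {P f : α → ℝ} {t : ℝ}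
    (hP : IsDist P) (h : ∑ a, P a * f a ≤ t) : ∃ a, f a ≤ t := by
  by_contra! hf
  obtain ⟨a, ha⟩ := hP.exists_pos
  have hlt : ∑ a, P a * t < ∑ a, P a * f a :=
    Finset.sum_lt_sum (fun a _ => mul_le_mul_of_nonneg_left (hf a).le (hP.1 a))
      ⟨a, Finset.mem_univ a, mul_lt_mul_of_pos_left (hf a) ha⟩
  rw [← Finset.sum_mul, hP.2, one_mul] at hlt
  exact hlt.not_ge h

theorem IsDist.sum_mul_eq {α : Type*} [Fintype α] {P f : α → ℝ} (hP : IsDist P) {c : ℝ}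
    (h : ∀ a, P a = 0 ∨ f a = c) : ∑ a, P a * f a = c := by
  rw [← one_mul c, ← hP.2, Finset.sum_mul]
  refine Finset.sum_congr rfl fun a _ => ?_
  rcases h a with h | h <;> simp [h]

theorem card_le_two_mul_card_filter_le {ι : Type*} [Fintype ι] {f : ι → ℝ} {ε : ℝ}
    (hf : ∀ i, 0 ≤ f i) (h : ∑ i, f i ≤ Fintype.card ι * ε) :
    Fintype.card ι ≤ 2 * (Finset.univ.filter fun i => f i ≤ 2 * ε).card := by
  by_contra! hlt
  set bad := Finset.univ.filter fun i => ¬ f i ≤ 2 * ε with hbad_def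
  have hsplit := Finset.card_filter_add_card_filter_not (s := Finset.univ) fun i => f i ≤ 2 * ε
  rw [← hbad_def, Finset.card_univ] at hsplit
  have hcard : Fintype.card ι ≤ bad.card * 2 := by omega
  have hne : bad.Nonempty := Finset.card_pos.1 (by omega)
  have hε : 0 ≤ ε := nonneg_of_mul_nonneg_right ((Finset.sum_nonneg fun i _ => hf i).trans h)
    (by exact_mod_cast (by omega : 0 < Fintype.card ι))
  have hbad : bad.card * (2 * ε) < ∑ i ∈ bad, f i := by
    rw [← nsmul_eq_mul, ← Finset.sum_const]
    exact Finset.sum_lt_sum_of_nonempty hne fun i hi => not_le.1 (Finset.mem_filter.1 hi).2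
  have hsum : ∑ i ∈ bad, f i ≤ ∑ i, f i :=
    Finset.sum_le_sum_of_subset_of_nonneg (Finset.subset_univ _) fun i _ _ => hf i
  have hcard' : Fintype.card ι * ε ≤ bad.card * (2 * ε) := by
    rw [← mul_assoc]
    gcongr
    exact_mod_cast hcard
  linarith

/-- The product distribution `P^ι`; it governs both the letters of a random codeword and the
codewords of a random code. -/
def iidProb {A ι : Type*} [Fintype ι] (P : A → ℝ) (c : ι → A) : ℝ := ∏ i, P (c i)

section IID
variable {A ι : Type*} [Fintype A] [Fintype ι] [DecidableEq ι] {P : A → ℝ}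

theorem sum_iidProb_mul_prod (P : A → ℝ) (h : ι → A → ℝ) :
    ∑ c : ι → A, iidProb P c * ∏ i, h i (c i) = ∏ i, ∑ a, P a * h i a := by
  simp only [iidProb, ← Finset.prod_mul_distrib]
  rw [← Fintype.piFinset_univ, Finset.sum_prod_piFinset Finset.univ fun i a => P a * h i a]

theorem IsDist.iidProb (hP : IsDist P) : IsDist (iidProb P : (ι → A) → ℝ) :=
  ⟨fun _ => Finset.prod_nonneg fun _ _ => hP.1 _, by
    simpa [hP.2] using sum_iidProb_mul_prod (ι := ι) P fun _ _ => 1⟩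

theorem sum_iidProb_mul_apply (hP : IsDist P) (k : ι) (g : A → ℝ) :
    ∑ c : ι → A, RCB.iidProb P c * g (c k) = ∑ a, P a * g a := by
  have h := sum_iidProb_mul_prod P fun i a => if i = k then g a else 1
  simp only [Finset.prod_ite_eq', Finset.mem_univ, if_true] at h
  rw [h, Finset.prod_eq_single k (fun i _ hi => by simp [hi, hP.2]) (by simp)]
  simp

theorem sum_iidProb_mul_apply_mul_apply (hP : IsDist P) {k l : ι} (hkl : k ≠ l) (g h : A → ℝ) :
    ∑ c : ι → A, RCB.iidProb P c * (g (c k) * h (c l)) =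
      (∑ a, P a * g a) * ∑ a, P a * h a := by
  have H := sum_iidProb_mul_prod P fun i a =>
    (if i = k then g a else 1) * (if i = l then h a else 1)
  simp only [Finset.prod_mul_distrib, Finset.prod_ite_eq', Finset.mem_univ, if_true] at H
  rw [H, Finset.prod_eq_mul k l hkl
    (fun i _ hi => by simp [hi.1, hi.2, hP.2]) (by simp) (by simp)]
  simp [hkl, hkl.symm]

end IID

section Confusion
variable {A B ι : Type*} (V : A → B → ℝ)

/-- The output `b` of the codeword `c m` is ambiguous: it is possible under another codeword too. -/
def Confused (c : ι → A) (m : ι) (b : B) : Prop := ∃ k, k ≠ m ∧ 0 < V (c k) b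

variable {V} in
theorem exists_decoder_confused [Nonempty ι] (c : ι → A) :
    ∃ φ : B → ι, ∀ m b, 0 < V (c m) b → φ b ≠ m → Confused V c m b :=
  ⟨fun b => Classical.epsilon fun m => 0 < V (c m) b, fun m _ hb hne =>
    ⟨_, hne, Classical.epsilon_spec (p := fun m => 0 < V (c m) _) ⟨m, hb⟩⟩⟩

theorem indicator_confused_le_sum [Fintype ι] [DecidableEq ι] (c : ι → A) (m : ι) (b : B) :
    (if Confused V c m b then (1 : ℝ) else 0) ≤
      ∑ k ∈ Finset.univ.erase m, if 0 < V (c k) b then 1 else 0 := by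
  split_ifs with h
  · obtain ⟨k, hkm, hk⟩ := h
    have hle := Finset.single_le_sum (f := fun k => if 0 < V (c k) b then (1 : ℝ) else 0)
      (fun _ _ => by positivity) (Finset.mem_erase.2 ⟨hkm, Finset.mem_univ k⟩)
    simpa [hk] using hle
  · positivity

variable [Fintype B]

/-- The probability that the output of the codeword `c m` is also compatible with another
codeword of `c`. -/
noncomputable def confusionProb (c : ι → A) (m : ι) : ℝ :=
  ∑ b, V (c m) b * (if Confused V c m b then 1 else 0)

variable {V}

theorem confusionProb_nonneg (hV : ∀ a b, 0 ≤ V a b) (c : ι → A) (m : ι) :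
    0 ≤ confusionProb V c m :=
  Finset.sum_nonneg fun b _ => mul_nonneg (hV _ _) (by positivity)

theorem sum_mul_indicator_le_confusionProb (hV : ∀ a b, 0 ≤ V a b) {c : ι → A} {m : ι}
    {p : B → Prop} [DecidablePred p] (hp : ∀ b, 0 < V (c m) b → p b → Confused V c m b) :
    ∑ b, V (c m) b * (if p b then (1 : ℝ) else 0) ≤ confusionProb V c m := by
  refine Finset.sum_le_sum fun b _ => ?_
  rcases (hV (c m) b).eq_or_lt with hzero | hpos
  · simp [← hzero]
  · gcongr
    split_ifs with hpb hconf hconf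
    · exact le_rfl
    · exact absurd (hp b hpos hpb) hconf
    · exact zero_le_one
    · exact le_rfl

theorem confusionProb_comp_le {κ : Type*} (hV : ∀ a b, 0 ≤ V a b) (c : ι → A) {e : κ → ι}
    (he : Function.Injective e) (m : κ) : confusionProb V (c ∘ e) m ≤ confusionProb V c (e m) :=
  sum_mul_indicator_le_confusionProb hV (c := c) (m := e m) (p := Confused V (c ∘ e) m)
    fun _ _ ⟨k, hkm, hk⟩ => ⟨e k, he.ne hkm, hk⟩

end Confusion

section RandomCode
variable {A B ι : Type*} [Fintype A] (V : A → B → ℝ) (P : A → ℝ)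

/-- The output distribution of the channel `V` with input distribution `P`. -/
def outProb (b : B) : ℝ := ∑ a, P a * V a b

/-- The `P`-probability of the set of inputs compatible with the output `b`, that is, under which
`b` is possible. -/
noncomputable def compatProb (b : B) : ℝ := ∑ a, P a * (if 0 < V a b then 1 else 0)

/-- The random coding union bound `E[min(1, t P(X' compatible with Y))]`, for `Y` the output of `V`
and `X'` an independent input: it controls the error probability of a random code with `t` codewords
when the decoder only looks for a compatible codeword. -/
noncomputable def unionBound [Fintype B] (t : ℝ) : ℝ :=
  ∑ b, outProb V P b * min 1 (t * compatProb V P b)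

variable {V P}

theorem outProb_nonneg (hV : ∀ a b, 0 ≤ V a b) (hP : IsDist P) (b : B) : 0 ≤ outProb V P b :=
  Finset.sum_nonneg fun a _ => mul_nonneg (hP.1 a) (hV a b)

theorem compatProb_nonneg (hP : IsDist P) (b : B) : 0 ≤ compatProb V P b :=
  Finset.sum_nonneg fun a _ => mul_nonneg (hP.1 a) (by positivity)

variable [Fintype B]

theorem unionBound_le_mul_unionBound (hV : ∀ a b, 0 ≤ V a b) (hP : IsDist P) {r s t : ℝ}
    (hr : 1 ≤ r) (ht : t ≤ r * s) : unionBound V P t ≤ r * unionBound V P s := by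
  rw [unionBound, unionBound, Finset.mul_sum]
  refine Finset.sum_le_sum fun b _ => ?_
  rw [mul_left_comm, mul_min_of_nonneg _ _ (by linarith : 0 ≤ r), mul_one, ← mul_assoc]
  gcongr
  · exact outProb_nonneg hV hP b
  · exact compatProb_nonneg hP b

variable [Fintype ι]

theorem sum_iidProb_mul_confusionProb_le [DecidableEq ι] (hV : ∀ a b, 0 ≤ V a b) (hP : IsDist P)
    (m : ι) :
    ∑ c : ι → A, iidProb P c * confusionProb V c m ≤ unionBound V P (Fintype.card ι) := by
  simp only [confusionProb, Finset.mul_sum (s := (Finset.univ : Finset B))]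
  rw [Finset.sum_comm]
  refine Finset.sum_le_sum fun b _ => ?_
  rw [mul_min_of_nonneg _ _ (outProb_nonneg hV hP b), mul_one]
  refine le_min ?_ ?_
  · rw [outProb, ← sum_iidProb_mul_apply hP m fun a => V a b]
    refine Finset.sum_le_sum fun c _ => mul_le_mul_of_nonneg_left ?_ (hP.iidProb.1 c)
    exact mul_le_of_le_one_right (hV _ _) (by split_ifs <;> simp)
  · calc ∑ c : ι → A, iidProb P c *
            (V (c m) b * (if Confused V c m b then 1 else 0))
        ≤ ∑ c : ι → A, iidProb P c * (V (c m) b *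
            ∑ k ∈ Finset.univ.erase m, if 0 < V (c k) b then 1 else 0) := by
          gcongr with c
          · exact hP.iidProb.1 c
          · exact hV _ _
          · exact indicator_confused_le_sum V c m b
      _ = ∑ _ ∈ Finset.univ.erase m, outProb V P b * compatProb V P b := by
          simp only [Finset.mul_sum]
          rw [Finset.sum_comm]
          exact Finset.sum_congr rfl fun k hk => sum_iidProb_mul_apply_mul_apply hP
            (Finset.ne_of_mem_erase hk).symm (fun a => V a b) fun a => if 0 < V a b then 1 else 0
      _ ≤ outProb V P b * (Fintype.card ι * compatProb V P b) := by
          rw [Finset.sum_const, nsmul_eq_mul, mul_left_comm]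
          gcongr
          · exact outProb_nonneg hV hP b
          · exact compatProb_nonneg hP b
          · exact Finset.card_le_univ _

theorem exists_sum_confusionProb_le (hV : ∀ a b, 0 ≤ V a b) (hP : IsDist P) :
    ∃ c : ι → A, ∑ m, confusionProb V c m ≤
      Fintype.card ι * unionBound V P (Fintype.card ι) := by
  refine (hP.iidProb (ι := ι)).exists_le_of_sum_mul_le ?_
  simp only [Finset.mul_sum]
  rw [Finset.sum_comm]
  refine (Finset.sum_le_sum fun m _ => sum_iidProb_mul_confusionProb_le hV hP m).trans_eq ?_
  rw [Finset.sum_const, Finset.card_univ, nsmul_eq_mul]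

/-- Expurgation: half of the codewords of a code of size `2 M` are at most twice as bad as the
average one. -/
theorem exists_code_le (hV : ∀ a b, 0 ≤ V a b) (hP : IsDist P) {M : ℕ} (hM : 0 < M) :
    ∃ (f : Fin M → A) (φ : B → Fin M), ∀ m,
      ∑ b, V (f m) b * (if φ b ≠ m then (1 : ℝ) else 0) ≤ 2 * unionBound V P (2 * M) := by
  obtain ⟨c, hc⟩ := exists_sum_confusionProb_le (ι := Fin (2 * M)) hV hP
  have hcard := card_le_two_mul_card_filter_le (fun m => confusionProb_nonneg hV c m) hc
  simp only [Fintype.card_fin, Nat.cast_mul, Nat.cast_ofNat] at hcard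
  set good := Finset.univ.filter fun m => confusionProb V c m ≤ 2 * unionBound V P (2 * M)
  have hgood : M ≤ good.card := Nat.le_of_mul_le_mul_left hcard two_pos
  set e := good.orderEmbOfCardLe hgood
  have he (m : Fin M) : confusionProb V c (e m) ≤ 2 * unionBound V P (2 * M) :=
    (Finset.mem_filter.1 (good.orderEmbOfCardLe_mem hgood m)).2
  have : Nonempty (Fin M) := ⟨⟨0, hM⟩⟩
  obtain ⟨φ, hφ⟩ := exists_decoder_confused (V := V) (c ∘ e)
  exact ⟨c ∘ e, φ, fun m => (sum_mul_indicator_le_confusionProb hV (hφ m)).trans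
    ((confusionProb_comp_le hV c e.injective m).trans (he m))⟩

end RandomCode

/-! ### Singular pairs -/

section Extension
variable {X Y : Type*} {W : X → Y → ℝ} {Q : X → ℝ} {N : ℕ}

theorem Wn_nonneg (hW : ∀ x y, 0 ≤ W x y) (x : Fin N → X) (y : Fin N → Y) : 0 ≤ Wn W x y :=
  Finset.prod_nonneg fun _ _ => hW _ _

theorem Wn_pos_iff (hW : ∀ x y, 0 ≤ W x y) {x : Fin N → X} {y : Fin N → Y} :
    0 < Wn W x y ↔ ∀ i, 0 < W (x i) (y i) := by
  rw [(Wn_nonneg hW x y).lt_iff_ne']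
  simp [Wn, Finset.prod_ne_zero_iff, (hW _ _).lt_iff_ne']

variable [Fintype X]

theorem outProb_Wn (y : Fin N → Y) :
    outProb (Wn W) (iidProb Q) y = ∏ i, outProb W Q (y i) :=
  sum_iidProb_mul_prod Q fun i x => W x (y i)

theorem compatProb_Wn (hW : ∀ x y, 0 ≤ W x y) (y : Fin N → Y) :
    compatProb (Wn W) (iidProb Q) y = ∏ i, compatProb W Q (y i) := by
  refine Eq.trans ?_ (sum_iidProb_mul_prod Q fun i x => if 0 < W x (y i) then 1 else 0)
  simp only [compatProb, Wn_pos_iff hW, Finset.prod_ite_zero, Finset.prod_const_one,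
    Finset.mem_univ, true_imp_iff]

end Extension

section Singular
variable {X Y : Type*} [Fintype X] (W : X → Y → ℝ) (Q : X → ℝ)

/-- The information density `log (W(y|x) / P(y))` of a singular pair. Given `y`, all the likelihoods
`W(y|x)` that occur coincide, so that it depends on `y` only and equals
`-log P(X compatible with y)`. -/
noncomputable def infoDensity (y : Y) : ℝ := -Real.log (compatProb W Q y)

/-- The moment generating function of minus the information density of a singular pair. -/
noncomputable def infoMgf [Fintype Y] (ρ : ℝ) : ℝ :=
  ∑ y, outProb W Q y * Real.exp (-ρ * infoDensity W Q y)

variable {W Q} {y : Y} {w : ℝ}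

theorem mul_eq_zero_of_outProb_eq_zero (hW : ∀ x y, 0 ≤ W x y) (hQ : IsDist Q)
    (h : outProb W Q y = 0) (x : X) : Q x * W x y = 0 :=
  (Finset.sum_eq_zero_iff_of_nonneg fun x _ => mul_nonneg (hQ.1 x) (hW x y)).1 h x
    (Finset.mem_univ x)

theorem Singular.exists_likelihood (hs : Singular W Q) (hW : ∀ x y, 0 ≤ W x y) (hQ : IsDist Q)
    (h : 0 < outProb W Q y) : ∃ w, 0 < w ∧ ∀ x, Q x = 0 ∨ W x y = 0 ∨ W x y = w := by
  obtain ⟨z, -, hz⟩ := Finset.exists_lt_of_sum_lt (s := Finset.univ) (f := fun _ : X => (0 : ℝ))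
    (by simpa [outProb] using h)
  refine ⟨W z y, pos_of_mul_pos_right hz (hQ.1 z), fun x => ?_⟩
  rcases (mul_nonneg (hQ.1 x) (hW x y)).eq_or_lt with hx | hx
  · rcases mul_eq_zero.1 hx.symm with h0 | h0
    · exact Or.inl h0
    · exact Or.inr (Or.inl h0)
  · exact Or.inr (Or.inr (hs x y z (mul_pos hx hz)))

theorem sum_mul_rpow_eq (hw : 0 < w) (h : ∀ x, Q x = 0 ∨ W x y = 0 ∨ W x y = w) {s : ℝ}
    (hs : 0 < s) : ∑ x, Q x * W x y ^ s = w ^ s * compatProb W Q y := by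
  rw [compatProb, Finset.mul_sum]
  refine Finset.sum_congr rfl fun x _ => ?_
  rcases h x with h | h | h
  · simp [h]
  · simp [h, Real.zero_rpow hs.ne']
  · simp [h, hw, mul_comm]

theorem outProb_eq_mul_compatProb (hw : 0 < w) (h : ∀ x, Q x = 0 ∨ W x y = 0 ∨ W x y = w) :
    outProb W Q y = w * compatProb W Q y := by
  simpa [outProb] using sum_mul_rpow_eq hw h one_pos

theorem compatProb_pos (hW : ∀ x y, 0 ≤ W x y) (hQ : IsDist Q) (h : 0 < outProb W Q y) :
    0 < compatProb W Q y := by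
  refine (compatProb_nonneg hQ y).lt_of_ne fun h0 => h.ne' ?_
  have hzero := (Finset.sum_eq_zero_iff_of_nonneg
    fun x _ => mul_nonneg (hQ.1 x) (by positivity)).1 h0.symm
  refine Finset.sum_eq_zero fun x hx => ?_
  rcases (hW x y).eq_or_lt with hxy | hxy
  · rw [← hxy, mul_zero]
  · have hQx := hzero x hx
    rw [if_pos hxy, mul_one] at hQx
    rw [hQx, zero_mul]

theorem exp_neg_infoDensity (hW : ∀ x y, 0 ≤ W x y) (hQ : IsDist Q) (h : 0 < outProb W Q y) :
    Real.exp (-infoDensity W Q y) = compatProb W Q y := by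
  rw [infoDensity, neg_neg, Real.exp_log (compatProb_pos hW hQ h)]

theorem prod_compatProb_eq (hW : ∀ x y, 0 ≤ W x y) (hQ : IsDist Q) {N : ℕ} {y : Fin N → Y}
    (hy : ∀ i, 0 < outProb W Q (y i)) :
    ∏ i, compatProb W Q (y i) = Real.exp (-∑ i, infoDensity W Q (y i)) := by
  rw [← Finset.sum_neg_distrib, Real.exp_sum]
  exact Finset.prod_congr rfl fun i _ => (exp_neg_infoDensity hW hQ (hy i)).symm

theorem gallager_summand_eq (hs : Singular W Q) (hW : ∀ x y, 0 ≤ W x y) (hQ : IsDist Q) {ρ : ℝ}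
    (hρ : -1 < ρ) (y : Y) : (∑ x, Q x * W x y ^ (1 / (1 + ρ))) ^ (1 + ρ) =
      outProb W Q y * Real.exp (-ρ * infoDensity W Q y) := by
  have hρ1 : 0 < 1 + ρ := by linarith
  have hinv : 0 < 1 / (1 + ρ) := by positivity
  rcases (outProb_nonneg hW hQ y).eq_or_lt with h0 | h0
  · rw [← h0, zero_mul, Finset.sum_eq_zero, Real.zero_rpow hρ1.ne']
    intro x _
    rcases mul_eq_zero.1 (mul_eq_zero_of_outProb_eq_zero hW hQ h0.symm x) with h | h
    · simp [h]
    · rw [h, Real.zero_rpow hinv.ne', mul_zero]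
  · obtain ⟨w, hw, hlik⟩ := hs.exists_likelihood hW hQ h0
    have hcompat := compatProb_pos hW hQ h0
    calc (∑ x, Q x * W x y ^ (1 / (1 + ρ))) ^ (1 + ρ)
        = w * compatProb W Q y ^ (1 + ρ) := by
          rw [sum_mul_rpow_eq hw hlik hinv, Real.mul_rpow (by positivity) hcompat.le,
            ← Real.rpow_mul hw.le, one_div_mul_cancel hρ1.ne', Real.rpow_one]
      _ = outProb W Q y * compatProb W Q y ^ ρ := by
          rw [Real.rpow_one_add' hcompat.le hρ1.ne', outProb_eq_mul_compatProb hw hlik, mul_assoc]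
      _ = outProb W Q y * Real.exp (-ρ * infoDensity W Q y) := by
          rw [infoDensity, neg_mul_neg, mul_comm ρ, ← Real.rpow_def_of_pos hcompat]

variable [Fintype Y] {ρ : ℝ}

theorem isDist_outProb (hW : IsChannel W) (hQ : IsDist Q) : IsDist (outProb W Q) := by
  refine ⟨outProb_nonneg hW.1 hQ, ?_⟩
  simp only [outProb]
  rw [Finset.sum_comm]
  simp only [← Finset.mul_sum, hW.2, mul_one, hQ.2]

theorem infoMgf_pos (hW : IsChannel W) (hQ : IsDist Q) (ρ : ℝ) : 0 < infoMgf W Q ρ := by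
  obtain ⟨y, hy⟩ := (isDist_outProb hW hQ).exists_pos
  exact Finset.sum_pos' (fun y _ => mul_nonneg (outProb_nonneg hW.1 hQ y) (Real.exp_pos _).le)
    ⟨y, Finset.mem_univ y, by positivity⟩

theorem Eo_eq_neg_log_infoMgf (hs : Singular W Q) (hW : ∀ x y, 0 ≤ W x y) (hQ : IsDist Q)
    (hρ : -1 < ρ) : Eo W ρ Q = -Real.log (infoMgf W Q ρ) := by
  simp only [Eo, infoMgf, gallager_summand_eq hs hW hQ hρ]

theorem fRho_eq (hs : Singular W Q) (hW : ∀ x y, 0 ≤ W x y) (hQ : IsDist Q) (hρ : -1 < ρ) (y : Y) :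
    fRho W Q ρ y = outProb W Q y * Real.exp (-ρ * infoDensity W Q y) / infoMgf W Q ρ := by
  simp only [fRho, infoMgf, gallager_summand_eq hs hW hQ hρ]

theorem isDist_fRho (hs : Singular W Q) (hW : IsChannel W) (hQ : IsDist Q) (hρ : -1 < ρ) :
    IsDist (fRho W Q ρ) := by
  refine ⟨fun y => ?_, ?_⟩
  · rw [fRho_eq hs hW.1 hQ hρ]
    exact div_nonneg (mul_nonneg (outProb_nonneg hW.1 hQ y) (Real.exp_pos _).le)
      (infoMgf_pos hW hQ ρ).le
  · simp only [fRho_eq hs hW.1 hQ hρ, ← Finset.sum_div]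
    exact div_self (infoMgf_pos hW hQ ρ).ne'

theorem fRho_zero (hW : IsChannel W) (hQ : IsDist Q) (y : Y) : fRho W Q 0 y = outProb W Q y := by
  have hsum := (isDist_outProb hW hQ).2
  simp only [outProb] at hsum
  simp [fRho, outProb, hsum]

theorem outProb_eq_fRho_mul_exp (hs : Singular W Q) (hW : IsChannel W) (hQ : IsDist Q)
    (hρ : -1 < ρ) (y : Y) :
    outProb W Q y = fRho W Q ρ y * Real.exp (ρ * infoDensity W Q y - Eo W ρ Q) := by
  have hmgf := infoMgf_pos hW hQ ρ
  rw [fRho_eq hs hW.1 hQ hρ, Eo_eq_neg_log_infoMgf hs hW.1 hQ hρ, sub_neg_eq_add, Real.exp_add,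
    Real.exp_log hmgf, neg_mul, Real.exp_neg]
  field_simp

theorem hasDerivAt_Eo (hs : Singular W Q) (hW : IsChannel W) (hQ : IsDist Q) (hρ : -1 < ρ) :
    HasDerivAt (fun ρ => Eo W ρ Q) (∑ y, fRho W Q ρ y * infoDensity W Q y) ρ := by
  have hmgf : HasDerivAt (infoMgf W Q)
      (∑ y, outProb W Q y * (Real.exp (-ρ * infoDensity W Q y) * -infoDensity W Q y)) ρ :=
    HasDerivAt.fun_sum fun y _ =>
      ((((hasDerivAt_neg ρ).mul_const _).exp).const_mul _).congr_deriv (by simp)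
  have hEo : (fun ρ => Eo W ρ Q) =ᶠ[nhds ρ] fun ρ => -Real.log (infoMgf W Q ρ) := by
    filter_upwards [lt_mem_nhds hρ] with r hr using Eo_eq_neg_log_infoMgf hs hW.1 hQ hr
  refine ((hmgf.log (infoMgf_pos hW hQ ρ).ne').neg.congr_deriv ?_).congr_of_eventuallyEq hEo
  rw [Finset.sum_div, ← Finset.sum_neg_distrib]
  refine Finset.sum_congr rfl fun y _ => ?_
  rw [fRho_eq hs hW.1 hQ hρ]
  ring

theorem RcrQ_eq_sum_fRho_mul_infoDensity (hs : Singular W Q) (hW : IsChannel W) (hQ : IsDist Q) :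
    RcrQ W Q = ∑ y, fRho W Q 1 y * infoDensity W Q y :=
  (hasDerivAt_Eo hs hW hQ (by norm_num)).deriv

theorem MI_eq_sum_outProb_mul_infoDensity (hs : Singular W Q) (hW : ∀ x y, 0 ≤ W x y)
    (hQ : IsDist Q) : MI W Q = ∑ y, outProb W Q y * infoDensity W Q y := by
  rw [MI, Finset.sum_comm]
  refine Finset.sum_congr rfl fun y _ => ?_
  simp only [← outProb.eq_def W Q y]
  rcases (outProb_nonneg hW hQ y).eq_or_lt with h0 | h0
  · simp [mul_eq_zero_of_outProb_eq_zero hW hQ h0.symm, ← h0]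
  · obtain ⟨w, hw, hlik⟩ := hs.exists_likelihood hW hQ h0
    nth_rewrite 2 [outProb]
    rw [Finset.sum_mul]
    refine Finset.sum_congr rfl fun x _ => ?_
    rcases hlik x with h | h | h
    · simp [h]
    · simp [h]
    · rw [outProb_eq_mul_compatProb hw hlik, h, infoDensity, div_mul_cancel_left₀ hw.ne',
        Real.log_inv]

/-- If the information density were constant on the support of the output, both `R_cr(Q)` and
`I(Q; W)` would be equal to that constant. -/
theorem exists_infoDensity_lt (hs : Singular W Q) (hW : IsChannel W) (hQ : IsDist Q)
    (hlt : RcrQ W Q < MI W Q) :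
    ∃ a b, 0 < outProb W Q a ∧ 0 < outProb W Q b ∧ infoDensity W Q a < infoDensity W Q b := by
  by_contra! hle
  obtain ⟨a, ha⟩ := (isDist_outProb hW hQ).exists_pos
  have hconst (y : Y) : outProb W Q y = 0 ∨ infoDensity W Q y = infoDensity W Q a := by
    rcases (outProb_nonneg hW.1 hQ y).eq_or_lt with h | h
    · exact Or.inl h.symm
    · exact Or.inr (le_antisymm (hle a y ha h) (hle y a h ha))
  have hMI : MI W Q = infoDensity W Q a := by
    rw [MI_eq_sum_outProb_mul_infoDensity hs hW.1 hQ]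
    exact (isDist_outProb hW hQ).sum_mul_eq hconst
  have hRcr : RcrQ W Q = infoDensity W Q a := by
    rw [RcrQ_eq_sum_fRho_mul_infoDensity hs hW hQ]
    refine (isDist_fRho hs hW hQ (by norm_num)).sum_mul_eq fun y => (hconst y).imp_left fun h => ?_
    rw [fRho_eq hs hW.1 hQ (by norm_num), h, zero_mul, zero_div]
  exact hlt.ne (hRcr.trans hMI.symm)

theorem exists_optimal_tilt (hs : Singular W Q) (hW : IsChannel W) (hQ : IsDist Q) {R : ℝ}
    (hR1 : RcrQ W Q < R) (hR2 : R < MI W Q) :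
    ∃ ρ ∈ Set.Ioo (0 : ℝ) 1, ErQ W R Q = -ρ * R + Eo W ρ Q := by
  have hderiv {ρ : ℝ} (hρ : ρ ∈ Set.Icc (0 : ℝ) 1) : HasDerivAt (fun ρ => -ρ * R + Eo W ρ Q)
      (-1 * R + ∑ y, fRho W Q ρ y * infoDensity W Q y) ρ :=
    ((hasDerivAt_neg ρ).mul_const R).add (hasDerivAt_Eo hs hW hQ (by linarith [hρ.1]))
  have hzero : 0 < -1 * R + ∑ y, fRho W Q 0 y * infoDensity W Q y := by
    simp only [fRho_zero hW hQ, ← MI_eq_sum_outProb_mul_infoDensity hs hW.1 hQ]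
    linarith
  have hone : -1 * R + ∑ y, fRho W Q 1 y * infoDensity W Q y < 0 := by
    rw [← RcrQ_eq_sum_fRho_mul_infoDensity hs hW hQ]
    linarith
  obtain ⟨ρ, hρ, hmax⟩ := exists_mem_Ioo_isMaxOn zero_lt_one
    (fun ρ hρ => (hderiv hρ).continuousAt.continuousWithinAt)
    (hderiv (Set.left_mem_Icc.2 zero_le_one)).hasDerivWithinAt
    (hderiv (Set.right_mem_Icc.2 zero_le_one)).hasDerivWithinAt hzero hone
  have hgreatest : IsGreatest ((fun ρ => -ρ * R + Eo W ρ Q) '' Set.Icc 0 1) (-ρ * R + Eo W ρ Q) :=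
    ⟨Set.mem_image_of_mem _ (Set.Ioo_subset_Icc_self hρ),
      Set.forall_mem_image.2 fun _ hr => hmax hr⟩
  exact ⟨ρ, hρ, hgreatest.csSup_eq⟩

/-! ### The random coding bound -/

variable {κ : ℝ} {N : ℕ}

theorem prod_outProb_eq (hs : Singular W Q) (hW : IsChannel W) (hQ : IsDist Q) (hρ : -1 < ρ)
    (y : Fin N → Y) : ∏ i, outProb W Q (y i) =
      (∏ i, fRho W Q ρ (y i)) * Real.exp (ρ * ∑ i, infoDensity W Q (y i) - N * Eo W ρ Q) := by
  rw [Finset.prod_congr rfl fun i _ => outProb_eq_fRho_mul_exp hs hW hQ hρ (y i),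
    Finset.prod_mul_distrib, ← Real.exp_sum, Finset.sum_sub_distrib, ← Finset.mul_sum]
  simp

theorem prod_outProb_mul_min_le (hs : Singular W Q) (hW : IsChannel W) (hQ : IsDist Q)
    (hρ : -1 < ρ) (h1 : κ ≤ ρ) (h2 : κ ≤ 1 - ρ) (r : ℝ) (y : Fin N → Y) :
    (∏ i, outProb W Q (y i)) * min 1 (Real.exp r * ∏ i, compatProb W Q (y i)) ≤
      Real.exp (ρ * r - N * Eo W ρ Q) *
        ((∏ i, fRho W Q ρ (y i)) * Real.exp (-κ * |-r + ∑ i, infoDensity W Q (y i)|)) := by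
  have hf : 0 ≤ ∏ i, fRho W Q ρ (y i) := Finset.prod_nonneg fun i _ => (isDist_fRho hs hW hQ hρ).1 _
  set S := ∑ i, infoDensity W Q (y i)
  by_cases hy : ∀ i, 0 < outProb W Q (y i)
  · calc (∏ i, outProb W Q (y i)) * min 1 (Real.exp r * ∏ i, compatProb W Q (y i))
        = (∏ i, outProb W Q (y i)) * min 1 (Real.exp (r - S)) := by
          rw [prod_compatProb_eq hW.1 hQ hy, ← Real.exp_add, ← sub_eq_add_neg]
      _ ≤ (∏ i, fRho W Q ρ (y i)) * Real.exp (ρ * S - N * Eo W ρ Q) *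
            (Real.exp (ρ * (r - S)) * Real.exp (-κ * |r - S|)) := by
          rw [prod_outProb_eq hs hW hQ hρ]
          gcongr
          exact min_one_exp_le h1 h2 _
      _ = Real.exp ((ρ * S - N * Eo W ρ Q) + ρ * (r - S)) *
            ((∏ i, fRho W Q ρ (y i)) * Real.exp (-κ * |-r + S|)) := by
          rw [Real.exp_add, abs_sub_comm r S, sub_eq_neg_add S r]
          ring
      _ = Real.exp (ρ * r - N * Eo W ρ Q) *
            ((∏ i, fRho W Q ρ (y i)) * Real.exp (-κ * |-r + S|)) := by
          ring_nf
  · obtain ⟨i, hi⟩ := not_forall.1 hy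
    have hzero : outProb W Q (y i) = 0 := le_antisymm (not_lt.1 hi) (outProb_nonneg hW.1 hQ _)
    rw [Finset.prod_eq_zero (Finset.mem_univ i) hzero, zero_mul]
    positivity

theorem unionBound_le_walkOp (hs : Singular W Q) (hW : IsChannel W) (hQ : IsDist Q)
    (hρ : -1 < ρ) (h1 : κ ≤ ρ) (h2 : κ ≤ 1 - ρ) (N : ℕ) (r : ℝ) :
    unionBound (Wn (N := N) W) (iidProb Q) (Real.exp r) ≤ Real.exp (ρ * r - N * Eo W ρ Q) *
      (walkOp (infoDensity W Q) (fRho W Q ρ) ^ N) (fun u => Real.exp (-κ * |u|)) (-r) := by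
  simp only [unionBound, outProb_Wn, compatProb_Wn hW.1, walkOp_pow_apply, Finset.mul_sum]
  exact Finset.sum_le_sum fun y _ => prod_outProb_mul_min_le hs hW hQ hρ h1 h2 r y

theorem exists_unionBound_le (hs : Singular W Q) (hW : IsChannel W) (hQ : IsDist Q) {R : ℝ}
    (hR1 : RcrQ W Q < R) (hR2 : R < MI W Q) :
    ∃ K : ℝ, 0 < K ∧ ∀ N : ℕ, 0 < N → unionBound (Wn (N := N) W) (iidProb Q) (Real.exp (N * R)) ≤
      K / √N * Real.exp (-(N : ℝ) * ErQ W R Q) := by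
  obtain ⟨ρ, ⟨hρ0, hρ1⟩, hEr⟩ := exists_optimal_tilt hs hW hQ hR1 hR2
  obtain ⟨a, b, ha, hb, hab⟩ := exists_infoDensity_lt hs hW hQ (hR1.trans hR2)
  have hρ : -1 < ρ := by linarith
  have hf {y : Y} (hy : 0 < outProb W Q y) : 0 < fRho W Q ρ y := by
    rw [fRho_eq hs hW.1 hQ hρ]
    exact div_pos (mul_pos hy (Real.exp_pos _)) (infoMgf_pos hW hQ ρ)
  obtain ⟨G, hG⟩ := exists_sum_exp_neg_abs_le (lt_min hρ0 (sub_pos.2 hρ1)) (sub_pos.2 hab)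
  have hG1 : 1 ≤ G := by simpa using hG 0 1
  have ht := lt_min (hf ha) (hf hb)
  set κ := min ρ (1 - ρ)
  set t := min (fRho W Q ρ a) (fRho W Q ρ b)
  refine ⟨G / √(2 * t), by positivity, fun N hN => ?_⟩
  have hwalk : (walkOp (infoDensity W Q) (fRho W Q ρ) ^ N) (fun u => Real.exp (-κ * |u|))
      (-(N * R)) ≤ G / √(2 * t * (N + 1)) :=
    walkOp_pow_le_div_sqrt (isDist_fRho hs hW hQ hρ) (fun h => hab.ne (congrArg _ h)) ht
      (min_le_left _ _) (min_le_right _ _) (fun _ => (Real.exp_pos _).le)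
      (by simpa only [nsmul_eq_mul] using hG) N _
  calc unionBound (Wn (N := N) W) (iidProb Q) (Real.exp (N * R))
      ≤ Real.exp (ρ * (N * R) - N * Eo W ρ Q) * (G / √(2 * t * (N + 1))) :=
        (unionBound_le_walkOp hs hW hQ hρ (min_le_left _ _) (min_le_right _ _) N _).trans
          (mul_le_mul_of_nonneg_left hwalk (Real.exp_pos _).le)
    _ ≤ Real.exp (ρ * (N * R) - N * Eo W ρ Q) * (G / √(2 * t * N)) := by
        gcongr
        linarith
    _ = G / √(2 * t) / √N * Real.exp (-(N : ℝ) * ErQ W R Q) := by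
        rw [Real.sqrt_mul (by positivity), div_div, mul_comm, hEr]
        ring_nf

end Singular

theorem two_mul_nMsgs_le {R : ℝ} (hR : 0 < R) (N : ℕ) :
    (2 * nMsgs N R : ℝ) ≤ 4 * Real.exp (N * R) := by
  have hexp : 1 ≤ Real.exp (N * R) := Real.one_le_exp (by positivity)
  have hceil := Nat.ceil_lt_add_one (Real.exp_pos (N * R)).le
  rw [nMsgs]
  linarith

theorem statement1_general {X Y : Type*} [Fintype X] [Fintype Y]
    (W : X → Y → ℝ) (hW : IsChannel W) (Q : X → ℝ) (hQ : IsDist Q) (R : ℝ) (hR : 0 < R)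
    (hsing : Singular W Q) (hR1 : RcrQ W Q < R) (hR2 : R < MI W Q) :
    ∃ K : ℝ, 0 < K ∧ ∀ N : ℕ, 0 < N →
      ∃ (f : Fin (nMsgs N R) → Fin N → X) (φ : (Fin N → Y) → Fin (nMsgs N R)),
        Pmax W f φ ≤ K / Real.sqrt N * Real.exp (-(N : ℝ) * ErQ W R Q) := by
  obtain ⟨K, hK, hbound⟩ := exists_unionBound_le hsing hW hQ hR1 hR2
  refine ⟨8 * K, by positivity, fun N hN => ?_⟩
  have hM : 0 < nMsgs N R := Nat.ceil_pos.2 (Real.exp_pos _)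
  have : Nonempty (Fin (nMsgs N R)) := ⟨⟨0, hM⟩⟩
  obtain ⟨f, φ, hcode⟩ := exists_code_le (Wn_nonneg (N := N) hW.1) (hQ.iidProb (ι := Fin N)) hM
  refine ⟨f, φ, ciSup_le fun m => ?_⟩
  calc ∑ y, Wn W (f m) y * (if φ y ≠ m then (1 : ℝ) else 0)
      ≤ 2 * unionBound (Wn W) (iidProb Q) (2 * nMsgs N R) := by convert hcode m
    _ ≤ 2 * (4 * unionBound (Wn W) (iidProb Q) (Real.exp (N * R))) := by
        gcongr
        exact unionBound_le_mul_unionBound (Wn_nonneg hW.1) hQ.iidProb (by norm_num)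
          (two_mul_nMsgs_le hR N)
    _ ≤ 2 * (4 * (K / √N * Real.exp (-(N : ℝ) * ErQ W R Q))) := by gcongr; exact hbound N hN
    _ = 8 * K / √N * Real.exp (-(N : ℝ) * ErQ W R Q) := by ring

/-- Refined random coding bound, singular case: existence of an `(N,R)` code
with maximal error probability at most `K̃₁ / √N · exp(-N E_r(R,Q))`. -/
theorem statement1 {X Y : Type*} [Fintype X] [Fintype Y] [Nonempty X] [Nonempty Y]
    (W : X → Y → ℝ) (hW : IsChannel W) (hcr : Rcr W < Capacity W)
    (Q : X → ℝ) (hQ : IsDist Q) (R : ℝ) (hR : 0 < R)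
    (hsing : Singular W Q) (hR1 : RcrQ W Q < R) (hR2 : R < MI W Q) :
    ∃ K : ℝ, 0 < K ∧ ∀ N : ℕ, 0 < N →
      ∃ (f : Fin (nMsgs N R) → Fin N → X) (φ : (Fin N → Y) → Fin (nMsgs N R)),
        Pmax W f φ ≤ K / Real.sqrt N * Real.exp (-(N : ℝ) * ErQ W R Q) :=
  statement1_general W hW Q hQ R hR hsing hR1 hR2

end RCB
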